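/- Let n ≥ 5, α := (n−3)/2, and let d ≥ 1 be an integer; write s' := t_{1,d}^{α,α} for the largest root of p_d^{α,α} and q_{d,α} := (α²−1)/((d+α)(d+α+1)). Then the function y(t) := (1−t²)^{(α+1)/2}·p_d^{α,α}(t) is concave on the interval [s', sqrt(1−q_{d,α})]. -/

import Mathlib

open MeasureTheory Filter Real

noncomputable section

/-- Generalized binomial coefficient `C(a, k)` for real `a`. -/
def genBinom (a : ℝ) (k : ℕ) : ℝ := (∏ i ∈ Finset.range k, (a - i)) / (Nat.factorial k : ℝ)

/-- The Jacobi polynomial `p_d^{α,β}`, via the standard explicit formula; it is the degree-`d`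
polynomial orthogonal to lower degrees for the weight `(1-t)^α (1+t)^β` on `[-1,1]`,
normalized by `p_d^{α,β}(1) = Γ(d+α+1)/(Γ(α+1)Γ(d+1))`. -/
def jacobiP (α β : ℝ) (d : ℕ) (x : ℝ) : ℝ :=
  ∑ s ∈ Finset.range (d + 1),
    genBinom ((d : ℝ) + α) (d - s) * genBinom ((d : ℝ) + β) s *
      ((x - 1) / 2) ^ s * ((x + 1) / 2) ^ (d - s)

/-- The largest root `t_{1,d}^{α,β}` of the Jacobi polynomial `p_d^{α,β}`. -/
def maxRoot (α β : ℝ) (d : ℕ) : ℝ := sSup {x : ℝ | jacobiP α β d x = 0}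

/-- `q_{d,α} = (α² - 1)/((d+α)(d+α+1))`. -/
def qda (d : ℕ) (α : ℝ) : ℝ := (α ^ 2 - 1) / (((d : ℝ) + α) * ((d : ℝ) + α + 1))

/-!
The Jacobi differential equation shows that
`y(t) = (1-t)^{(α+1)/2} (1+t)^{(β+1)/2} p_d^{α,β}(t)` satisfies `y'' = -Q y` on `(-1,1)` for an
explicit rational function `Q`: the weight is chosen so that the first-order terms cancel. Beyond
the largest root `p_d^{α,β}` is positive, so `y` is concave wherever `Q ≥ 0`. For `α = β` one has
`Q(t) = (d+α)(d+α+1)(1 - q_{d,α} - t²)/(1-t²)²`.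
-/

section JacobiEquation

open Polynomial

lemma genBinom_succ_mul (a : ℝ) (k : ℕ) :
    genBinom a (k + 1) * (k + 1) = genBinom a k * (a - k) := by
  have hk : (k.factorial : ℝ) ≠ 0 := by positivity
  unfold genBinom
  rw [Finset.prod_range_succ, Nat.factorial_succ]
  push_cast
  field_simp

/-- The coefficient of `((x-1)/2)^s ((x+1)/2)^(d-s)` in `p_d^{α,β}`. -/
def jacobiCoeff (α β : ℝ) (d s : ℕ) : ℝ :=
  genBinom ((d : ℝ) + α) (d - s) * genBinom ((d : ℝ) + β) s

lemma jacobiCoeff_succ_mul (α β : ℝ) {d s : ℕ} (hs : s < d) :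
    jacobiCoeff α β d (s + 1) * ((s + 1) * (s + 1 + α)) =
      jacobiCoeff α β d s * ((d - s) * (d - s + β)) := by
  obtain ⟨k, rfl⟩ := Nat.exists_eq_add_of_lt hs
  have hβ := genBinom_succ_mul (((s + k + 1 : ℕ) : ℝ) + β) s
  have hα := genBinom_succ_mul (((s + k + 1 : ℕ) : ℝ) + α) k
  unfold jacobiCoeff
  rw [show s + k + 1 - (s + 1) = k by lia, show s + k + 1 - s = k + 1 by lia]
  push_cast at hα hβ ⊢
  linear_combination (genBinom (s + k + 1 + α) k * (s + 1 + α)) * hβ -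
    (genBinom (s + k + 1 + β) s * (k + 1 + β)) * hα

/-- The product `((X-1)/2)^s ((X+1)/2)^k`; those with `s + k = d` are the building blocks of
the explicit formula for `p_d^{α,β}`. -/
def jacobiMonomial (s k : ℕ) : ℝ[X] :=
  (C (1 / 2) * (X - 1)) ^ s * (C (1 / 2) * (X + 1)) ^ k

/-- The Jacobi polynomial `p_d^{α,β}` as an element of `ℝ[X]`. -/
def jacobiPoly (α β : ℝ) (d : ℕ) : ℝ[X] :=
  ∑ s ∈ Finset.range (d + 1), jacobiCoeff α β d s • jacobiMonomial s (d - s)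

lemma eval_jacobiPoly (α β : ℝ) (d : ℕ) (x : ℝ) :
    (jacobiPoly α β d).eval x = jacobiP α β d x := by
  simp only [jacobiPoly, jacobiP, jacobiCoeff, jacobiMonomial, eval_finsetSum, eval_smul, eval_mul,
    eval_pow, eval_C, eval_sub, eval_add, eval_X, eval_one, smul_eq_mul]
  refine Finset.sum_congr rfl fun s _ => ?_
  ring

lemma continuous_jacobiP (α β : ℝ) (d : ℕ) : Continuous (jacobiP α β d) := by
  simpa only [eval_jacobiPoly] using (jacobiPoly α β d).continuous

lemma jacobiP_neg (α β : ℝ) (d : ℕ) (x : ℝ) :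
    jacobiP α β d (-x) = (-1) ^ d * jacobiP β α d x := by
  unfold jacobiP
  rw [← Finset.sum_range_reflect, Finset.mul_sum]
  refine Finset.sum_congr rfl fun s hs => ?_
  obtain ⟨k, rfl⟩ := Nat.exists_eq_add_of_le (Nat.lt_succ_iff.1 (Finset.mem_range.1 hs))
  rw [show s + k + 1 - 1 - s = k by lia, show s + k - k = s by lia, show s + k - s = k by lia,
    show (-x - 1) / 2 = -1 * ((x + 1) / 2) by ring, show (-x + 1) / 2 = -1 * ((x - 1) / 2) by ring,
    mul_pow, mul_pow, pow_add]
  ring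

/-- The Jacobi differential operator `p ↦ (1-X²) p'' + (β-α-(α+β+2)X) p'`. -/
def jacobiOperator (α β : ℝ) : ℝ[X] →ₗ[ℝ] ℝ[X] :=
  LinearMap.mulLeft ℝ (1 - X ^ 2) ∘ₗ derivative ∘ₗ derivative +
    LinearMap.mulLeft ℝ (C (β - α) - C (α + β + 2) * X) ∘ₗ derivative

lemma jacobiOperator_jacobiMonomial (α β : ℝ) (s k : ℕ) :
    jacobiOperator α β (jacobiMonomial s k) =
      -(((s + k) * (s + k + α + β + 1) : ℝ) • jacobiMonomial s k) +
      ((k * (k + β) : ℝ) • jacobiMonomial s (k - 1) -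
        (s * (s + α) : ℝ) • jacobiMonomial (s - 1) k) := by
  refine Polynomial.funext fun x => ?_
  simp only [jacobiOperator, jacobiMonomial, LinearMap.add_apply, LinearMap.comp_apply,
    LinearMap.mulLeft_apply, derivative_mul, derivative_pow, derivative_add, derivative_sub,
    derivative_zero, derivative_one, derivative_C, derivative_X, eval_add,
    eval_sub, eval_neg, eval_mul, eval_pow, eval_smul, eval_C, eval_X, eval_one, eval_zero,
    smul_eq_mul]
  -- Small exponents are treated separately because `s - 1` and `k - 1` are truncated.
  rcases s with _ | _ | s <;> rcases k with _ | _ | k <;>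
    simp only [Nat.add_sub_cancel, Nat.zero_sub, Nat.cast_add, Nat.cast_one, Nat.cast_zero,
      zero_add, Nat.sub_self] <;>
    ring

lemma jacobiOperator_jacobiPoly (α β : ℝ) (d : ℕ) :
    jacobiOperator α β (jacobiPoly α β d) =
      -((d * (d + α + β + 1) : ℝ) • jacobiPoly α β d) := by
  -- By the recurrence for the coefficients, the off-diagonal terms telescope.
  let lower (s : ℕ) : ℝ[X] :=
    (jacobiCoeff α β d s * (s * (s + α))) • jacobiMonomial (s - 1) (d - s)
  let upper (s : ℕ) : ℝ[X] :=
    (jacobiCoeff α β d s * ((d - s) * (d - s + β))) • jacobiMonomial s (d - s - 1)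
  have upper_eq_lower_succ : ∀ s ∈ Finset.range d, upper s = lower (s + 1) := by
    intro s hs
    simp only [upper, lower, ← jacobiCoeff_succ_mul α β (Finset.mem_range.1 hs), Nat.cast_succ,
      Nat.add_sub_cancel, Nat.sub_sub]
  have operator_term : ∀ s ∈ Finset.range (d + 1),
      jacobiOperator α β (jacobiCoeff α β d s • jacobiMonomial s (d - s)) =
        -((d * (d + α + β + 1) : ℝ) • jacobiCoeff α β d s • jacobiMonomial s (d - s)) +
          (upper s - lower s) := by
    intro s hs
    rw [map_smul, jacobiOperator_jacobiMonomial,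
      Nat.cast_sub (Nat.lt_succ_iff.1 (Finset.mem_range.1 hs))]
    simp only [upper, lower]
    module
  have sum_upper_eq_sum_lower :
      ∑ s ∈ Finset.range (d + 1), upper s = ∑ s ∈ Finset.range (d + 1), lower s := by
    rw [Finset.sum_range_succ, Finset.sum_range_succ', Finset.sum_congr rfl upper_eq_lower_succ]
    simp [upper, lower]
  rw [jacobiPoly, map_sum, Finset.sum_congr rfl operator_term, Finset.sum_add_distrib,
    Finset.sum_sub_distrib, sum_upper_eq_sum_lower, sub_self, add_zero, Finset.sum_neg_distrib,
    Finset.smul_sum]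

lemma jacobiPoly_differential_equation (α β : ℝ) (d : ℕ) (t : ℝ) :
    (1 - t ^ 2) * (derivative (derivative (jacobiPoly α β d))).eval t +
      (β - α - (α + β + 2) * t) * (derivative (jacobiPoly α β d)).eval t +
      d * (d + α + β + 1) * (jacobiPoly α β d).eval t = 0 := by
  have h := congrArg (eval t) (jacobiOperator_jacobiPoly α β d)
  simp only [jacobiOperator, LinearMap.add_apply, LinearMap.comp_apply, LinearMap.mulLeft_apply,
    eval_add, eval_sub, eval_mul, eval_pow, eval_one, eval_X, eval_C, eval_neg, eval_smul,
    smul_eq_mul] at h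
  linear_combination h

end JacobiEquation

section LargestRoot

variable {α β : ℝ}

lemma genBinom_pos {a : ℝ} {k : ℕ} (h : (k : ℝ) < a + 1) : 0 < genBinom a k := by
  refine div_pos (Finset.prod_pos fun i hi => ?_) (by positivity)
  have hik : (i : ℝ) + 1 ≤ k := by exact_mod_cast Finset.mem_range.1 hi
  linarith

lemma jacobiCoeff_pos (hα : -1 < α) (hβ : -1 < β) {d s : ℕ} (hs : s ≤ d) :
    0 < jacobiCoeff α β d s := by
  have hsd : (s : ℝ) ≤ d := by exact_mod_cast hs
  have hds : ((d - s : ℕ) : ℝ) ≤ d := by exact_mod_cast Nat.sub_le d s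
  exact mul_pos (genBinom_pos (by linarith)) (genBinom_pos (by linarith))

lemma jacobiP_pos_of_one_le (hα : -1 < α) (hβ : -1 < β) (d : ℕ) {x : ℝ} (hx : 1 ≤ x) :
    0 < jacobiP α β d x := by
  have hU : 0 ≤ (x - 1) / 2 := by linarith
  have hV : 0 < (x + 1) / 2 := by linarith
  refine Finset.sum_pos' (fun s hs => ?_) ⟨0, by simp, ?_⟩
  · have hc := jacobiCoeff_pos hα hβ (Nat.lt_succ_iff.1 (Finset.mem_range.1 hs))
    exact mul_nonneg (mul_nonneg hc.le (pow_nonneg hU _)) (pow_nonneg hV.le _)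
  · have hc := jacobiCoeff_pos hα hβ (Nat.zero_le d)
    exact mul_pos (mul_pos hc (by simp)) (pow_pos hV _)

lemma bddAbove_setOf_jacobiP_eq_zero (hα : -1 < α) (hβ : -1 < β) (d : ℕ) :
    BddAbove {x : ℝ | jacobiP α β d x = 0} :=
  ⟨1, fun _ hx => le_of_not_ge fun h => (jacobiP_pos_of_one_le hα hβ d h).ne' hx⟩

lemma jacobiP_pos_of_maxRoot_lt (hα : -1 < α) (hβ : -1 < β) {d : ℕ} {x : ℝ}
    (hx : maxRoot α β d < x) : 0 < jacobiP α β d x := by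
  rcases le_total 1 x with h1 | h1
  · exact jacobiP_pos_of_one_le hα hβ d h1
  by_contra! hneg
  obtain ⟨r, hr, hr0⟩ := intermediate_value_Icc h1 (continuous_jacobiP α β d).continuousOn
    ⟨hneg, (jacobiP_pos_of_one_le hα hβ d le_rfl).le⟩
  exact (hx.trans_le hr.1).not_ge (le_csSup (bddAbove_setOf_jacobiP_eq_zero hα hβ d) hr0)

lemma maxRoot_nonneg (hα : -1 < α) (d : ℕ) : 0 ≤ maxRoot α α d := by
  have hbdd := bddAbove_setOf_jacobiP_eq_zero hα hα d
  rcases Set.eq_empty_or_nonempty {x : ℝ | jacobiP α α d x = 0} with h | ⟨r, hr⟩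
  · rw [maxRoot, h, Real.sSup_empty]
  · have hneg : jacobiP α α d (-r) = 0 := by rw [jacobiP_neg, Set.mem_ofPred.1 hr, mul_zero]
    have h₁ : r ≤ maxRoot α α d := le_csSup hbdd hr
    have h₂ : -r ≤ maxRoot α α d := le_csSup hbdd hneg
    linarith

end LargestRoot

section NormalForm

open Polynomial

/-- The weight `w(t) = (1-t)^{(α+1)/2} (1+t)^{(β+1)/2}` that removes the first-order term from the
Jacobi equation. -/
def normalFormWeight (α β t : ℝ) : ℝ :=
  (1 - t) ^ ((α + 1) / 2) * (1 + t) ^ ((β + 1) / 2)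

/-- The logarithmic derivative `w' / w` of `normalFormWeight` on `(-1,1)`. -/
def normalFormLogDeriv (α β t : ℝ) : ℝ :=
  (β + 1) / 2 / (1 + t) - (α + 1) / 2 / (1 - t)

/-- The normal form `y = w p_d^{α,β}` of the Jacobi polynomial. -/
def jacobiNormalForm (α β : ℝ) (d : ℕ) (t : ℝ) : ℝ :=
  normalFormWeight α β t * jacobiP α β d t

/-- The potential `Q` in the normal form `y'' + Q y = 0` of the Jacobi equation, with the double
poles at `±1` separated from the simple ones. -/
def jacobiPotential (α β : ℝ) (d : ℕ) (t : ℝ) : ℝ :=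
  (1 - α ^ 2) / (4 * (1 - t) ^ 2) + (1 - β ^ 2) / (4 * (1 + t) ^ 2) +
    (d * (d + α + β + 1) + (α + 1) * (β + 1) / 2) / (1 - t ^ 2)

lemma hasDerivAt_normalFormWeight (α β : ℝ) {t : ℝ} (ht : t ∈ Set.Ioo (-1 : ℝ) 1) :
    HasDerivAt (normalFormWeight α β)
      (normalFormLogDeriv α β t * normalFormWeight α β t) t := by
  have h₁ : 1 - t ≠ 0 := by linarith [ht.2]
  have h₂ : 1 + t ≠ 0 := by linarith [ht.1]
  refine ((((hasDerivAt_id' t).const_sub 1).rpow_const (.inl h₁)).mul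
    (((hasDerivAt_id' t).const_add 1).rpow_const (.inl h₂))).congr_deriv ?_
  rw [normalFormLogDeriv, normalFormWeight, rpow_sub_one h₁, rpow_sub_one h₂]
  ring

lemma hasDerivAt_normalFormLogDeriv (α β : ℝ) {t : ℝ} (ht : t ∈ Set.Ioo (-1 : ℝ) 1) :
    HasDerivAt (normalFormLogDeriv α β)
      (-((β + 1) / 2 / (1 + t) ^ 2) - (α + 1) / 2 / (1 - t) ^ 2) t := by
  have h₁ : 1 - t ≠ 0 := by linarith [ht.2]
  have h₂ : 1 + t ≠ 0 := by linarith [ht.1]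
  refine (((hasDerivAt_const t ((β + 1) / 2)).div ((hasDerivAt_id' t).const_add 1) h₂).sub
    ((hasDerivAt_const t ((α + 1) / 2)).div ((hasDerivAt_id' t).const_sub 1) h₁)).congr_deriv ?_
  ring

lemma hasDerivAt_jacobiNormalForm (α β : ℝ) (d : ℕ) {t : ℝ} (ht : t ∈ Set.Ioo (-1 : ℝ) 1) :
    HasDerivAt (jacobiNormalForm α β d)
      (normalFormWeight α β t * (normalFormLogDeriv α β t * (jacobiPoly α β d).eval t +
        (derivative (jacobiPoly α β d)).eval t)) t := by
  have h := (hasDerivAt_normalFormWeight α β ht).mul ((jacobiPoly α β d).hasDerivAt t)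
  simp only [eval_jacobiPoly] at h ⊢
  exact h.congr_deriv (by ring)

lemma neg_jacobiPotential_eq (α β : ℝ) (d : ℕ) {t : ℝ} (ht : t ∈ Set.Ioo (-1 : ℝ) 1) :
    -jacobiPotential α β d t =
      normalFormLogDeriv α β t ^ 2 +
        (-((β + 1) / 2 / (1 + t) ^ 2) - (α + 1) / 2 / (1 - t) ^ 2) -
        d * (d + α + β + 1) / (1 - t ^ 2) := by
  have h₁ : 1 - t ≠ 0 := by linarith [ht.2]
  have h₂ : 1 + t ≠ 0 := by linarith [ht.1]
  rw [jacobiPotential, normalFormLogDeriv, show 1 - t ^ 2 = (1 - t) * (1 + t) by ring]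
  field_simp
  ring

lemma eval_derivative_derivative_jacobiPoly (α β : ℝ) (d : ℕ) {t : ℝ}
    (ht : t ∈ Set.Ioo (-1 : ℝ) 1) :
    (derivative (derivative (jacobiPoly α β d))).eval t =
      -(2 * normalFormLogDeriv α β t * (derivative (jacobiPoly α β d)).eval t) -
        d * (d + α + β + 1) / (1 - t ^ 2) * (jacobiPoly α β d).eval t := by
  have h₁ : 1 - t ≠ 0 := by linarith [ht.2]
  have h₂ : 1 + t ≠ 0 := by linarith [ht.1]
  have ode := jacobiPoly_differential_equation α β d t
  rw [show 1 - t ^ 2 = (1 - t) * (1 + t) by ring] at ode ⊢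
  rw [normalFormLogDeriv]
  field_simp
  linear_combination ode

lemma hasDerivAt_deriv_jacobiNormalForm (α β : ℝ) (d : ℕ) {t : ℝ}
    (ht : t ∈ Set.Ioo (-1 : ℝ) 1) :
    HasDerivAt (deriv (jacobiNormalForm α β d))
      (-(jacobiPotential α β d t * jacobiNormalForm α β d t)) t := by
  have hderiv := (hasDerivAt_normalFormWeight α β ht).mul
    (((hasDerivAt_normalFormLogDeriv α β ht).mul ((jacobiPoly α β d).hasDerivAt t)).add
      ((derivative (jacobiPoly α β d)).hasDerivAt t))
  refine (hderiv.congr_deriv ?_).congr_of_eventuallyEq ?_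
  · simp only [Pi.add_apply, Pi.mul_apply]
    rw [← neg_mul, neg_jacobiPotential_eq α β d ht, jacobiNormalForm, ← eval_jacobiPoly,
      eval_derivative_derivative_jacobiPoly α β d ht]
    ring
  · filter_upwards [isOpen_Ioo.mem_nhds ht] with x hx
    exact (hasDerivAt_jacobiNormalForm α β d hx).deriv

lemma continuous_jacobiNormalForm {α β : ℝ} (hα : -1 < α) (hβ : -1 < β) (d : ℕ) :
    Continuous (jacobiNormalForm α β d) := by
  have hu : Continuous fun t : ℝ => (1 - t) ^ ((α + 1) / 2) :=
    Continuous.rpow_const (by fun_prop) fun _ => .inr (by linarith)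
  have hv : Continuous fun t : ℝ => (1 + t) ^ ((β + 1) / 2) :=
    Continuous.rpow_const (by fun_prop) fun _ => .inr (by linarith)
  exact (hu.mul hv).mul (continuous_jacobiP α β d)

lemma jacobiNormalForm_pos {α β : ℝ} (hα : -1 < α) (hβ : -1 < β) {d : ℕ} {t : ℝ}
    (ht : t ∈ Set.Ioo (-1 : ℝ) 1) (hroot : maxRoot α β d < t) :
    0 < jacobiNormalForm α β d t :=
  mul_pos (mul_pos (rpow_pos_of_pos (by linarith [ht.2]) _)
    (rpow_pos_of_pos (by linarith [ht.1]) _)) (jacobiP_pos_of_maxRoot_lt hα hβ hroot)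

lemma concaveOn_jacobiNormalForm {α β : ℝ} (hα : -1 < α) (hβ : -1 < β) {d : ℕ} {a b : ℝ}
    (ha : -1 ≤ a) (hb : b ≤ 1) (hroot : maxRoot α β d ≤ a)
    (hQ : ∀ t ∈ Set.Ioo a b, 0 ≤ jacobiPotential α β d t) :
    ConcaveOn ℝ (Set.Icc a b) (jacobiNormalForm α β d) := by
  have hsub : Set.Ioo a b ⊆ Set.Ioo (-1) 1 := Set.Ioo_subset_Ioo ha hb
  refine concaveOn_of_hasDerivWithinAt2_nonpos (convex_Icc a b)
    (continuous_jacobiNormalForm hα hβ d).continuousOn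
    (f' := deriv (jacobiNormalForm α β d))
    (f'' := fun t => -(jacobiPotential α β d t * jacobiNormalForm α β d t)) ?_ ?_ ?_ <;>
    rw [interior_Icc] <;> intro t ht
  · exact (hasDerivAt_jacobiNormalForm α β d (hsub ht)).differentiableAt.hasDerivAt.hasDerivWithinAt
  · exact (hasDerivAt_deriv_jacobiNormalForm α β d (hsub ht)).hasDerivWithinAt
  · exact neg_nonpos.2 <| mul_nonneg (hQ t ht)
      (jacobiNormalForm_pos hα hβ (hsub ht) (hroot.trans_lt ht.1)).le

end NormalForm

section Ultraspherical

variable {α : ℝ} {d : ℕ}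

lemma jacobiNormalForm_self {t : ℝ} (ht : t ∈ Set.Icc (-1 : ℝ) 1) :
    jacobiNormalForm α α d t = (1 - t ^ 2) ^ ((α + 1) / 2) * jacobiP α α d t := by
  rw [jacobiNormalForm, normalFormWeight, ← mul_rpow (by linarith [ht.2]) (by linarith [ht.1]),
    show (1 - t) * (1 + t) = 1 - t ^ 2 by ring]

lemma jacobiPotential_self (hK : ((d : ℝ) + α) * (d + α + 1) ≠ 0) {t : ℝ}
    (ht : t ∈ Set.Ioo (-1 : ℝ) 1) :
    jacobiPotential α α d t =
      (1 - qda d α - t ^ 2) * ((d + α) * (d + α + 1)) / (1 - t ^ 2) ^ 2 := by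
  have h₁ : 1 - t ≠ 0 := by linarith [ht.2]
  have h₂ : 1 + t ≠ 0 := by linarith [ht.1]
  have hq : qda d α * ((d + α) * (d + α + 1)) = α ^ 2 - 1 := div_mul_cancel₀ _ hK
  rw [jacobiPotential, sub_mul, sub_mul, hq, show 1 - t ^ 2 = (1 - t) * (1 + t) by ring]
  field_simp
  ring

lemma qda_nonneg (hα : 1 ≤ α) : 0 ≤ qda d α :=
  div_nonneg (by nlinarith) (by positivity)

lemma sqrt_one_sub_qda_le_one (hα : 1 ≤ α) : √(1 - qda d α) ≤ 1 :=
  sqrt_le_one.2 (sub_le_self 1 (qda_nonneg hα))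

theorem jacobi_normal_form_concave_general (hα : -1 < α) (hd : 1 ≤ d) :
    ConcaveOn ℝ (Set.Icc (maxRoot α α d) (min 1 √(1 - qda d α)))
      (fun t => (1 - t ^ 2) ^ ((α + 1) / 2) * jacobiP α α d t) := by
  have hroot := maxRoot_nonneg hα d
  have hK : 0 < ((d : ℝ) + α) * (d + α + 1) := by
    have hd' : (1 : ℝ) ≤ d := by exact_mod_cast hd
    exact mul_pos (by linarith) (by linarith)
  refine (concaveOn_jacobiNormalForm hα hα (by linarith) (min_le_left _ _) le_rfl
    fun t ht => ?_).congr fun t ht => jacobiNormalForm_self ⟨by linarith [ht.1],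
      ht.2.trans (min_le_left _ _)⟩
  have ht0 : 0 < t := hroot.trans_lt ht.1
  have htq : t ^ 2 < 1 - qda d α := (lt_sqrt ht0.le).1 (ht.2.trans_le (min_le_right _ _))
  rw [jacobiPotential_self hK.ne' ⟨by linarith, ht.2.trans_le (min_le_left _ _)⟩]
  exact div_nonneg (mul_nonneg (by linarith) hK.le) (sq_nonneg _)

end Ultraspherical

/-- With `α = (n-3)/2`, the function `(1-t²)^{(α+1)/2}·p_d^{α,α}(t)` is
concave on `[t_{1,d}^{α,α}, sqrt(1 - q_{d,α})]`. -/
theorem jacobi_normal_form_concave (n : ℕ) (hn : 5 ≤ n) (d : ℕ) (hd : 1 ≤ d) :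
    ConcaveOn ℝ
      (Set.Icc (maxRoot (((n : ℝ) - 3) / 2) (((n : ℝ) - 3) / 2) d)
        (Real.sqrt (1 - qda d (((n : ℝ) - 3) / 2))))
      (fun t => (1 - t ^ 2) ^ ((((n : ℝ) - 3) / 2 + 1) / 2) *
        jacobiP (((n : ℝ) - 3) / 2) (((n : ℝ) - 3) / 2) d t) := by
  have hn' : (5 : ℝ) ≤ n := by exact_mod_cast hn
  have hα : (1 : ℝ) ≤ ((n : ℝ) - 3) / 2 := by linarith
  simpa only [min_eq_right (sqrt_one_sub_qda_le_one hα)] using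
    jacobi_normal_form_concave_general (α := ((n : ℝ) - 3) / 2) (by linarith) hd
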